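/- Let α and β be real numbers with 0 < α < 1 and 0 < β < 1. For real y > 2, define F(y) as the value of the continued fraction y/2 + K_{m=1}^∞(a_m/b_m(y)), where for m ≥ 1: a_{2m} = (2m−α−β)(2m−1+α)(2m−1+β)/4, a_{2m−1} = (2m−2+α+β)(2m−1−α)(2m−1−β)/4, b_{2m}(y) = y, b_{2m−1}(y) = (2m−1)y. Then for every real x > 2, the continued fractions defining F(x) and F(x+2) converge to positive real values, and F(x)/F(x+2) = (x+1−α)(x+α+β)(x+1−β) / [(x+1+α)(x+2−α−β)(x+1+β)]. -/

import Mathlib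

open Filter

noncomputable def cfA (a b : ℕ → ℝ) : ℕ → ℝ
  | 0 => 1
  | 1 => b 0
  | n + 2 => b (n + 1) * cfA a b (n + 1) + a (n + 1) * cfA a b n

noncomputable def cfB (a b : ℕ → ℝ) : ℕ → ℝ
  | 0 => 0
  | 1 => 1
  | n + 2 => b (n + 1) * cfB a b (n + 1) + a (n + 1) * cfB a b n

/-- The continued fraction `b 0 + K_{n=1}^∞ (a n / b n)` converges to `v`. -/
def CFConvergesTo (a b : ℕ → ℝ) (v : ℝ) : Prop :=
  (∀ᶠ n in atTop, cfB a b n ≠ 0) ∧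
    Tendsto (fun n => cfA a b n / cfB a b n) atTop (nhds v)
/-- `a_{2m} = (2m−α−β)(2m−1+α)(2m−1+β)/4`, `a_{2m−1} = (2m−2+α+β)(2m−1−α)(2m−1−β)/4`. -/
noncomputable def aSeq (α β : ℝ) : ℕ → ℝ := fun n =>
  if n % 2 = 0 then
    ((n : ℝ) - α - β) * ((n : ℝ) - 1 + α) * ((n : ℝ) - 1 + β) / 4
  else
    ((n : ℝ) - 1 + α + β) * ((n : ℝ) - α) * ((n : ℝ) - β) / 4

/-- `b_0 = y/2`, `b_{2m}(y) = y`, `b_{2m−1}(y) = (2m−1)y`. -/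
noncomputable def bSeq (y : ℝ) : ℕ → ℝ := fun n =>
  if n = 0 then y / 2 else if n % 2 = 0 then y else (n : ℝ) * y

/-! ### Generic facts about canonical numerators and denominators -/

noncomputable def prA (a : ℕ → ℝ) (n : ℕ) : ℝ := ∏ k ∈ Finset.range n, a (k + 1)

lemma prA_succ (a : ℕ → ℝ) (n : ℕ) : prA a (n + 1) = prA a n * a (n + 1) := by
  simp [prA, Finset.prod_range_succ]

lemma cfA_rec (a b : ℕ → ℝ) (n : ℕ) :
    cfA a b (n + 2) = b (n + 1) * cfA a b (n + 1) + a (n + 1) * cfA a b n := rfl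

lemma cfB_rec (a b : ℕ → ℝ) (n : ℕ) :
    cfB a b (n + 2) = b (n + 1) * cfB a b (n + 1) + a (n + 1) * cfB a b n := rfl

lemma cf_det (a b : ℕ → ℝ) (n : ℕ) :
    cfA a b (n + 1) * cfB a b n - cfA a b n * cfB a b (n + 1) = (-1) ^ (n + 1) * prA a n := by
  induction n with
  | zero => simp [cfA, cfB, prA]
  | succ n ih =>
    rw [cfA_rec, cfB_rec, prA_succ, pow_succ]
    linear_combination (-a (n + 1)) * ih

/-- contiguity transfer -/
lemma transfer (a b b' p q r s X X' : ℕ → ℝ) (c : ℝ)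
    (hX : ∀ n, X (n + 2) = b (n + 1) * X (n + 1) + a (n + 1) * X n)
    (hX' : ∀ n, X' (n + 2) = b' (n + 1) * X' (n + 1) + a (n + 1) * X' n)
    (h0 : c * X 0 = q 0 * X' 1 + s 0 * X' 0)
    (h1 : c * X 1 = p 0 * X' 1 + r 0 * X' 0)
    (hr : ∀ n, r n = a (n + 1) * q (n + 1))
    (hp : ∀ n, p n = b' (n + 1) * q (n + 1) + s (n + 1))
    (hs : ∀ n, p (n + 1) = s n + b (n + 1) * q (n + 1))
    (he : ∀ n, b (n + 1) * p n + a (n + 1) * q n = p (n + 1) * b' (n + 1) + r (n + 1))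
    (n : ℕ) :
    c * X n = q n * X' (n + 1) + s n * X' n ∧
      c * X (n + 1) = p n * X' (n + 1) + r n * X' n := by
  induction n with
  | zero => exact ⟨h0, h1⟩
  | succ n ih =>
    obtain ⟨i1, i2⟩ := ih
    constructor
    · rw [i2, hX', hr, hp]; ring
    · rw [hX, hX']
      linear_combination b (n + 1) * i2 + a (n + 1) * i1 + X' (n + 1) * he n
        + b (n + 1) * X' n * hr n - a (n + 1) * X' n * hs n

/-! ### Positivity and growth -/

lemma aSeq_pos {α β : ℝ} (hα0 : 0 < α) (hα1 : α < 1) (hβ0 : 0 < β) (hβ1 : β < 1) (n : ℕ) :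
    0 < aSeq α β (n + 1) := by
  have hn : (0 : ℝ) ≤ n := Nat.cast_nonneg n
  unfold aSeq
  split_ifs with h
  · have h1 : (1 : ℝ) ≤ n := by
      have : 1 ≤ n := by omega
      exact_mod_cast this
    push_cast
    have e1 : 0 < (n : ℝ) + 1 - α - β := by linarith
    have e2 : 0 < (n : ℝ) + 1 - 1 + α := by linarith
    have e3 : 0 < (n : ℝ) + 1 - 1 + β := by linarith
    positivity
  · push_cast
    have e1 : 0 < (n : ℝ) + 1 - 1 + α + β := by linarith
    have e2 : 0 < (n : ℝ) + 1 - α := by linarith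
    have e3 : 0 < (n : ℝ) + 1 - β := by linarith
    positivity

lemma aSeq_le {α β : ℝ} (hα0 : 0 < α) (hα1 : α < 1) (hβ0 : 0 < β) (hβ1 : β < 1) (n : ℕ) :
    aSeq α β (n + 1) ≤ ((n : ℝ) + 1) ^ 3 / 4 := by
  have hn : (0 : ℝ) ≤ n := Nat.cast_nonneg n
  unfold aSeq
  split_ifs with h
  · have h1 : (1 : ℝ) ≤ n := by
      have : 1 ≤ n := by omega
      exact_mod_cast this
    push_cast
    have e1 : ((n : ℝ) + 1 - α - β) * ((n : ℝ) + 1 - 1 + α) ≤ (n + 1) * (n + 1) := by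
      apply mul_le_mul <;> linarith
    have e2 : ((n : ℝ) + 1 - α - β) * ((n : ℝ) + 1 - 1 + α) * ((n : ℝ) + 1 - 1 + β)
        ≤ (n + 1) * (n + 1) * (n + 1) := by
      apply mul_le_mul e1 <;> first | linarith | positivity
    nlinarith [e2]
  · push_cast
    have e1 : ((n : ℝ) + 1 - 1 + α + β) * ((n : ℝ) + 1 - α) ≤ (n + 1) * (n + 1) := by
      nlinarith [sq_nonneg (((n : ℝ) + 1 - 1 + α + β) - ((n : ℝ) + 1 - α))]
    have e2 : ((n : ℝ) + 1 - 1 + α + β) * ((n : ℝ) + 1 - α) * ((n : ℝ) + 1 - β)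
        ≤ (n + 1) * (n + 1) * (n + 1) := by
      apply mul_le_mul e1 <;> first | linarith | positivity
    nlinarith [e2]

lemma bSeq_pos {y : ℝ} (hy : 2 < y) (n : ℕ) : 0 < bSeq y n := by
  unfold bSeq
  split_ifs with h h'
  · linarith
  · linarith
  · have : (0 : ℝ) < n := by exact_mod_cast Nat.pos_of_ne_zero h
    have : 0 < y := by linarith
    positivity

lemma bSeq_ge {y : ℝ} (hy : 2 < y) (n : ℕ) : y ≤ bSeq y (n + 1) := by
  unfold bSeq
  rw [if_neg (by omega)]
  split_ifs
  · exact le_rfl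
  · push_cast
    have hn : (0 : ℝ) ≤ n := Nat.cast_nonneg n
    nlinarith

lemma bSeq_mul {y : ℝ} (hy : 2 < y) (n : ℕ) :
    4 * ((n : ℝ) + 1) ≤ bSeq y (n + 1) * bSeq y (n + 2) := by
  have hn : (0 : ℝ) ≤ n := Nat.cast_nonneg n
  have hy2 : 4 ≤ y * y := by nlinarith
  unfold bSeq
  rw [if_neg (show ¬ n + 1 = 0 by omega), if_neg (show ¬ n + 2 = 0 by omega)]
  rcases Nat.even_or_odd' n with ⟨k, hk | hk⟩
  · rw [if_neg (show ¬ (n + 1) % 2 = 0 by omega), if_pos (show (n + 2) % 2 = 0 by omega)]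
    push_cast
    nlinarith
  · rw [if_pos (show (n + 1) % 2 = 0 by omega), if_neg (show ¬ (n + 2) % 2 = 0 by omega)]
    push_cast
    nlinarith

lemma cfB_pos (a b : ℕ → ℝ) (ha : ∀ n, 0 < a (n + 1)) (hb : ∀ n, 0 < b n) (n : ℕ) :
    0 < cfB a b (n + 1) ∧ 0 ≤ cfB a b n := by
  induction n with
  | zero => simp [cfB]
  | succ n ih =>
    refine ⟨?_, ih.1.le⟩
    rw [cfB_rec]
    have := mul_pos (hb (n + 1)) ih.1
    have := mul_nonneg (ha n).le ih.2
    linarith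

lemma cfA_ge (a b : ℕ → ℝ) (ha : ∀ n, 0 < a (n + 1)) (hb : ∀ n, 0 < b n) (n : ℕ) :
    b 0 * cfB a b (n + 1) ≤ cfA a b (n + 1) ∧ b 0 * cfB a b n ≤ cfA a b n := by
  induction n with
  | zero => simp [cfB, cfA]
  | succ n ih =>
    refine ⟨?_, ih.1⟩
    rw [cfB_rec, cfA_rec]
    have := mul_le_mul_of_nonneg_left ih.1 (hb (n + 1)).le
    have := mul_le_mul_of_nonneg_left ih.2 (ha n).le
    nlinarith

lemma cfB_mono (a b b' : ℕ → ℝ) (ha : ∀ n, 0 < a (n + 1)) (hb : ∀ n, 0 < b n)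
    (hbb : ∀ n, b n ≤ b' n) (n : ℕ) :
    cfB a b (n + 1) ≤ cfB a b' (n + 1) ∧ cfB a b n ≤ cfB a b' n := by
  induction n with
  | zero => simp [cfB]
  | succ n ih =>
    refine ⟨?_, ih.1⟩
    rw [cfB_rec, cfB_rec]
    have h1 := (cfB_pos a b ha hb n).1
    have := mul_le_mul (hbb (n + 1)) ih.1 h1.le ((hb _).le.trans (hbb _))
    have := mul_le_mul_of_nonneg_left ih.2 (ha n).le
    linarith

lemma prA_pos (a : ℕ → ℝ) (ha : ∀ n, 0 < a (n + 1)) (n : ℕ) : 0 < prA a n :=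
  Finset.prod_pos fun k _ => ha k

lemma cfB_growth (a b : ℕ → ℝ) (ha : ∀ n, 0 < a (n + 1)) (hb : ∀ n, 0 < b n)
    (n : ℕ) (t : ℝ) (ht : 0 ≤ t) (h : t ^ 2 * a (n + 2) ≤ b (n + 1) * b (n + 2)) :
    a (n + 1) * a (n + 2) * (cfB a b (n + 1) * cfB a b n) * (1 + 2 * t) ≤
      cfB a b (n + 3) * cfB a b (n + 2) := by
  have r3 := cfB_rec a b (n + 1)
  have r2 := cfB_rec a b n
  have p0 := (cfB_pos a b ha hb n).2
  have p1 := (cfB_pos a b ha hb n).1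
  have p2 := (cfB_pos a b ha hb (n + 1)).1
  have a1 := ha n
  have a2 := ha (n + 1)
  have b1 := hb (n + 1)
  have b2 := hb (n + 2)
  simp only [show n + 1 + 2 = n + 3 by omega, show n + 1 + 1 = n + 2 by omega] at *
  rw [r3]
  set B0 := cfB a b n
  set B1 := cfB a b (n + 1)
  set B2 := cfB a b (n + 2)
  set x1 := a (n + 1)
  set x2 := a (n + 2)
  set y1 := b (n + 1)
  set y2 := b (n + 2)
  have key : 2 * t * x2 * (B1 * B2) ≤ y2 * B2 ^ 2 + x2 * y1 * B1 ^ 2 := by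
    have h1 : x2 * B1 ^ 2 * (t ^ 2 * x2) ≤ x2 * B1 ^ 2 * (y1 * y2) :=
      mul_le_mul_of_nonneg_left h (by positivity)
    have h2 : y2 * (2 * t * x2 * (B1 * B2)) ≤ y2 * (y2 * B2 ^ 2 + x2 * y1 * B1 ^ 2) := by
      nlinarith [sq_nonneg (y2 * B2 - t * x2 * B1)]
    exact le_of_mul_le_mul_left h2 b2
  have h3 : x1 * B0 * B1 ≤ B2 * B1 := by
    rw [r2]; nlinarith [mul_pos (mul_pos b1 p1) p1]
  have h4 : 2 * t * x2 * (x1 * B0 * B1) ≤ 2 * t * x2 * (B2 * B1) :=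
    mul_le_mul_of_nonneg_left h3 (by positivity)
  have h5 : x2 * B1 * B2 = x2 * y1 * B1 ^ 2 + x2 * x1 * B1 * B0 := by rw [r2]; ring
  nlinarith

noncomputable def Dq (a b : ℕ → ℝ) (n : ℕ) : ℝ := cfB a b (n + 1) * cfB a b n / prA a n

section
variable {α β y : ℝ}

lemma Dq_step (hα0 : 0 < α) (hα1 : α < 1) (hβ0 : 0 < β) (hβ1 : β < 1) (hy : 2 < y) (n : ℕ) :
    Dq (aSeq α β) (bSeq y) n * (1 + 8 * (n + 1) / (n + 2) ^ 2) ≤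
      Dq (aSeq α β) (bSeq y) (n + 2) := by
  have ha := aSeq_pos hα0 hα1 hβ0 hβ1
  have hb := bSeq_pos hy
  have hn : (0 : ℝ) ≤ n := Nat.cast_nonneg n
  have g := cfB_growth _ _ ha hb n (4 * (n + 1) / (n + 2) ^ 2) (by positivity) (by
    refine le_trans ?_ (bSeq_mul hy n)
    have h1 := aSeq_le hα0 hα1 hβ0 hβ1 (n + 1)
    push_cast at h1
    calc (4 * ((n : ℝ) + 1) / (n + 2) ^ 2) ^ 2 * aSeq α β (n + 2)
        ≤ (4 * ((n : ℝ) + 1) / (n + 2) ^ 2) ^ 2 * (((n : ℝ) + 1 + 1) ^ 3 / 4) := by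
          apply mul_le_mul_of_nonneg_left h1 (by positivity)
      _ = 4 * ((n : ℝ) + 1) * (((n : ℝ) + 1) / (n + 2)) := by
          field_simp
          ring
      _ ≤ 4 * ((n : ℝ) + 1) * 1 := by
          apply mul_le_mul_of_nonneg_left _ (by positivity)
          rw [div_le_one (by positivity)]; linarith
      _ = 4 * ((n : ℝ) + 1) := by ring)
  unfold Dq
  have hp := prA_pos _ ha n
  rw [show n + 2 = n + 1 + 1 by omega, prA_succ, prA_succ]
  have a1 := ha n
  have a2 := ha (n + 1)
  rw [le_div_iff₀ (by positivity)]
  calc _ = aSeq α β (n + 1) * aSeq α β (n + 2) * (cfB (aSeq α β) (bSeq y) (n + 1) *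
        cfB (aSeq α β) (bSeq y) n) * (1 + 2 * (4 * (n + 1) / (n + 2) ^ 2)) := by
        field_simp
        ring
    _ ≤ _ := g

lemma Dq_bound (hα0 : 0 < α) (hα1 : α < 1) (hβ0 : 0 < β) (hβ1 : β < 1) (hy : 2 < y) :
    ∃ c : ℝ, 0 < c ∧ ∀ n : ℕ, c * ((n : ℝ) + 8) ^ 4 ≤ Dq (aSeq α β) (bSeq y) (n + 1) := by
  have ha := aSeq_pos hα0 hα1 hβ0 hβ1
  have hb := bSeq_pos hy
  have hD : ∀ n, 0 < Dq (aSeq α β) (bSeq y) (n + 1) := fun n =>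
    div_pos (mul_pos (cfB_pos _ _ ha hb _).1 (cfB_pos _ _ ha hb _).1) (prA_pos _ ha _)
  set D := Dq (aSeq α β) (bSeq y) with hDdef
  refine ⟨min (D 1 / 8 ^ 4) (D 2 / 9 ^ 4), ?_, ?_⟩
  · have := hD 0
    have := hD 1
    simp only [zero_add, one_add_one_eq_two] at *
    positivity
  set c := min (D 1 / 8 ^ 4) (D 2 / 9 ^ 4) with hc
  have c1 : c ≤ D 1 / 8 ^ 4 := min_le_left _ _
  have c2 : c ≤ D 2 / 9 ^ 4 := min_le_right _ _
  have : ∀ n : ℕ, c * ((n : ℝ) + 8) ^ 4 ≤ D (n + 1) ∧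
      c * (((n + 1 : ℕ) : ℝ) + 8) ^ 4 ≤ D (n + 1 + 1) := by
    intro n
    induction n with
    | zero =>
      constructor
      · norm_num at *; linarith
      · norm_num at *; linarith
    | succ n ih =>
      refine ⟨ih.2, ?_⟩
      have st := Dq_step hα0 hα1 hβ0 hβ1 hy (n + 1)
      have hn : (0 : ℝ) ≤ n := Nat.cast_nonneg n
      have hcpos : 0 ≤ c := by
        have h0 := hD 0
        have h1 := hD 1
        simp only [zero_add, one_add_one_eq_two] at h0 h1
        rw [hc]; positivity
      have hw : (0 : ℝ) ≤ 1 + 8 * ((n + 1 : ℕ) + 1) / ((n + 1 : ℕ) + 2) ^ 2 := by positivity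
      refine le_trans ?_ (le_trans (mul_le_mul_of_nonneg_right ih.1 hw) st)
      rw [mul_assoc]
      apply mul_le_mul_of_nonneg_left _ hcpos
      push_cast
      have e : (1 : ℝ) + 8 * ((n : ℝ) + 1 + 1) / ((n : ℝ) + 1 + 2) ^ 2
          = (((n : ℝ) + 3) ^ 2 + 8 * (n + 2)) / (n + 3) ^ 2 := by
        field_simp
        ring
      rw [e, ← mul_div_assoc, le_div_iff₀ (by positivity), ← sub_nonneg]
      ring_nf
      positivity
  exact fun n => (this n).1

lemma cf_converges (hα0 : 0 < α) (hα1 : α < 1) (hβ0 : 0 < β) (hβ1 : β < 1) (hy : 2 < y) :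
    ∃ F : ℝ, CFConvergesTo (aSeq α β) (bSeq y) F ∧ 0 < F := by
  have ha := aSeq_pos hα0 hα1 hβ0 hβ1
  have hb := bSeq_pos hy
  obtain ⟨c, hc, hD⟩ := Dq_bound hα0 hα1 hβ0 hβ1 hy
  set A := cfA (aSeq α β) (bSeq y) with hA
  set B := cfB (aSeq α β) (bSeq y) with hB
  have hBpos : ∀ n, 0 < B (n + 1) := fun n => (cfB_pos _ _ ha hb n).1
  have hcauchy : CauchySeq (fun n => A (n + 1) / B (n + 1)) := by
    have hs : Summable (fun n : ℕ => 1 / c * (1 / ((n : ℝ) + 1) ^ 2)) := by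
      apply Summable.mul_left
      have := (summable_nat_add_iff 1).mpr (Real.summable_one_div_nat_pow.mpr one_lt_two)
      simpa using this
    refine cauchySeq_of_dist_le_of_summable _ (fun n => ?_) hs
    have hdet := cf_det (aSeq α β) (bSeq y) (n + 1)
    rw [← hA, ← hB] at hdet
    have hn : (0 : ℝ) ≤ n := Nat.cast_nonneg n
    have hp := prA_pos _ ha (n + 1)
    have b1 := hBpos n
    have b2 := hBpos (n + 1)
    have e : A (n + 1 + 1) / B (n + 1 + 1) - A (n + 1) / B (n + 1)
        = (-1) ^ (n + 1 + 1) * (1 / Dq (aSeq α β) (bSeq y) (n + 1)) := by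
      unfold Dq
      rw [← hB]
      field_simp
      linear_combination hdet
    rw [dist_comm, Real.dist_eq, e, abs_mul, abs_pow, abs_neg, abs_one, one_pow, one_mul]
    have hd := hD n
    have h8 : c * ((n : ℝ) + 1) ^ 2 ≤ Dq (aSeq α β) (bSeq y) (n + 1) := by
      refine le_trans (mul_le_mul_of_nonneg_left ?_ hc.le) hd
      rw [← sub_nonneg]; ring_nf; positivity
    have hpos : 0 < c * ((n : ℝ) + 1) ^ 2 := by positivity
    rw [abs_of_pos (by have := hpos.trans_le h8; positivity)]
    calc _ ≤ 1 / (c * ((n : ℝ) + 1) ^ 2) := one_div_le_one_div_of_le hpos h8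
      _ = _ := by field_simp
  obtain ⟨F, hF⟩ := cauchySeq_tendsto_of_complete hcauchy
  refine ⟨F, ⟨?_, ?_⟩, ?_⟩
  · filter_upwards [eventually_ge_atTop 1] with n hn
    obtain ⟨m, rfl⟩ := Nat.exists_eq_add_of_le' hn
    exact (hBpos m).ne'
  · exact (tendsto_add_atTop_iff_nat (f := fun n => A n / B n) 1).mp hF
  · refine lt_of_lt_of_le (hb 0) (ge_of_tendsto' hF fun n => ?_)
    rw [le_div_iff₀ (hBpos n)]
    exact (cfA_ge _ _ ha hb n).1

/-- `∏ a / B²` tends to zero along odd indices. -/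
lemma err_tendsto (hα0 : 0 < α) (hα1 : α < 1) (hβ0 : 0 < β) (hβ1 : β < 1) (hy : 2 < y) :
    Tendsto (fun m : ℕ => prA (aSeq α β) (2 * m + 3) /
      cfB (aSeq α β) (bSeq y) (2 * m + 3) ^ 2) atTop (nhds 0) := by
  have ha := aSeq_pos hα0 hα1 hβ0 hβ1
  have hb := bSeq_pos hy
  obtain ⟨c, hc, hD⟩ := Dq_bound hα0 hα1 hβ0 hβ1 hy
  have hlim : Tendsto (fun m : ℕ => (y + 1) / c * (1 / ((m : ℝ) + 1))) atTop (nhds 0) := by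
    simpa using (tendsto_one_div_add_atTop_nhds_zero_nat (𝕜 := ℝ)).const_mul ((y + 1) / c)
  refine squeeze_zero (fun m => ?_) (fun m => ?_) hlim
  · have := prA_pos _ ha (2 * m + 3)
    positivity
  have hm : (0 : ℝ) ≤ m := Nat.cast_nonneg m
  have hp := prA_pos _ ha (2 * m + 3)
  have hd := hD (2 * m + 2)
  have b2 := (cfB_pos _ _ ha hb (2 * m + 1)).1
  have b3 := (cfB_pos _ _ ha hb (2 * m + 2)).1
  have r4 := cfB_rec (aSeq α β) (bSeq y) (2 * m + 2)
  have r3 := cfB_rec (aSeq α β) (bSeq y) (2 * m + 1)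
  have hb2 := bSeq_ge hy (2 * m + 1)
  have ha1 := ha (2 * m + 1)
  have ha2 := ha (2 * m + 2)
  have hal := aSeq_le hα0 hα1 hβ0 hβ1 (2 * m + 2)
  have b1 := (cfB_pos _ _ ha hb (2 * m + 1)).2
  have hbv : bSeq y (2 * m + 3) = (2 * m + 3) * y := by
    unfold bSeq
    rw [if_neg (by omega), if_neg (by omega)]
    push_cast; ring
  unfold Dq at hd
  simp only [show 2 * m + 2 + 2 = 2 * m + 4 by omega, show 2 * m + 2 + 1 = 2 * m + 3 by omega,
    show 2 * m + 1 + 2 = 2 * m + 3 by omega, show 2 * m + 1 + 1 = 2 * m + 2 by omega,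
    show 2 * m + 3 + 1 = 2 * m + 4 by omega] at *
  rw [hbv] at r4
  set B1 := cfB (aSeq α β) (bSeq y) (2 * m + 1)
  set B2 := cfB (aSeq α β) (bSeq y) (2 * m + 2)
  set B3 := cfB (aSeq α β) (bSeq y) (2 * m + 3)
  set B4 := cfB (aSeq α β) (bSeq y) (2 * m + 4)
  set pr := prA (aSeq α β) (2 * m + 3)
  push_cast at hd hal
  rw [le_div_iff₀ hp] at hd
  have h23 : B2 ≤ B3 := by
    rw [r3]
    have : B2 ≤ bSeq y (2 * m + 2) * B2 := by nlinarith
    have := mul_nonneg ha1.le b1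
    linarith
  have h34 : B4 ≤ (y + 1) * (2 * m + 3) ^ 3 * B3 := by
    rw [r4]
    have h1 : aSeq α β (2 * m + 3) * B2 ≤ (2 * m + 3) ^ 3 * B3 := by
      apply mul_le_mul _ h23 b2.le (by positivity)
      refine hal.trans ?_
      have : (2 * (m : ℝ) + 2 + 1) ^ 3 = (2 * m + 3) ^ 3 := by ring
      rw [this]
      have : (0 : ℝ) ≤ (2 * m + 3) ^ 3 := by positivity
      linarith
    have h2 : (2 * (m : ℝ) + 3) * y * B3 ≤ y * (2 * m + 3) ^ 3 * B3 := by
      apply mul_le_mul_of_nonneg_right _ b3.le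
      rw [mul_comm]
      apply mul_le_mul_of_nonneg_left _ (by linarith)
      rw [← sub_nonneg]; ring_nf; positivity
    nlinarith
  have h5 : c * (2 * (m : ℝ) + 2 + 8) ^ 4 * pr ≤ (y + 1) * (2 * m + 3) ^ 3 * B3 * B3 :=
    hd.trans (mul_le_mul_of_nonneg_right h34 b3.le)
  have h6 : (2 * (m : ℝ) + 3) ^ 3 * (m + 1) ≤ (2 * (m : ℝ) + 2 + 8) ^ 4 := by
    rw [← sub_nonneg]; ring_nf; positivity
  have h7 : (2 * (m : ℝ) + 3) ^ 3 * (c * (m + 1) * pr) ≤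
      (2 * (m : ℝ) + 3) ^ 3 * ((y + 1) * B3 ^ 2) := by
    have := mul_le_mul_of_nonneg_left h6 (mul_pos hc hp).le
    nlinarith
  have h8 := le_of_mul_le_mul_left h7 (by positivity)
  rw [div_mul_div_comm, mul_one, div_le_div_iff₀ (by positivity) (by positivity)]
  linarith

end

/-! ### The contiguity matrices -/

noncomputable def cS (α β y : ℝ) : ℝ :=
  (y + 1 + α) * (y + 1 + β) * (y + 2 - α - β) / (4 * (y + 1))

noncomputable def cP (α β y : ℝ) : ℝ :=
  (y + 1 - α) * (y + 1 - β) * (y + α + β) / (4 * (y + 1))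

noncomputable def qq (n : ℕ) : ℝ := if n % 2 = 0 then -(n : ℝ) else -1

noncomputable def pp (α β y : ℝ) (n : ℕ) : ℝ :=
  (n : ℝ) * (n - y) / 2 + if n % 2 = 0 then cP α β y else cS α β y - (1 + y) / 2

noncomputable def ss (α β y : ℝ) (n : ℕ) : ℝ :=
  ((n : ℝ) + 1) * (n + 1 + y) / 2 + if n % 2 = 0 then cS α β y - (1 + y) / 2 else cP α β y

lemma contig (α β y : ℝ) (hy : 2 < y) (X X' : ℕ → ℝ) (c : ℝ)
    (hX : ∀ n, X (n + 2) = bSeq y (n + 1) * X (n + 1) + aSeq α β (n + 1) * X n)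
    (hX' : ∀ n, X' (n + 2) = bSeq (y + 2) (n + 1) * X' (n + 1) + aSeq α β (n + 1) * X' n)
    (h0 : c * X 0 = cS α β y * X' 0)
    (h1 : c * X 1 = cP α β y * X' 1 - aSeq α β 1 * X' 0) (n : ℕ) :
    c * X n = qq n * X' (n + 1) + ss α β y n * X' n := by
  have hy1 : y + 1 ≠ 0 := by linarith
  refine (transfer (aSeq α β) (bSeq y) (bSeq (y + 2)) (pp α β y) qq
    (fun n => aSeq α β (n + 1) * qq (n + 1)) (ss α β y) X X' c hX hX' ?_ ?_ ?_ ?_ ?_ ?_ n).1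
  · rw [h0]; simp [qq, ss]
  · rw [h1]; simp [qq, pp]; ring
  · intro n; rfl
  · intro n
    rcases Nat.even_or_odd' n with ⟨k, rfl | rfl⟩
    · simp [pp, qq, ss, bSeq, Nat.add_mod]; ring
    · simp [pp, qq, ss, bSeq, Nat.add_mod]; ring
  · intro n
    rcases Nat.even_or_odd' n with ⟨k, rfl | rfl⟩
    · simp [pp, qq, ss, bSeq, Nat.add_mod]; ring
    · simp [pp, qq, ss, bSeq, Nat.add_mod]; ring
  · intro n
    rcases Nat.even_or_odd' n with ⟨k, rfl | rfl⟩
    · simp [pp, qq, aSeq, bSeq, Nat.add_mod, cS, cP]; field_simp; ring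
    · simp [pp, qq, aSeq, bSeq, Nat.add_mod, cS, cP]; field_simp; ring

theorem stmt16 (α β : ℝ) (hα0 : 0 < α) (hα1 : α < 1) (hβ0 : 0 < β) (hβ1 : β < 1)
    (x : ℝ) (hx : 2 < x) :
    ∃ F1 F2 : ℝ, CFConvergesTo (aSeq α β) (bSeq x) F1 ∧ 0 < F1 ∧
      CFConvergesTo (aSeq α β) (bSeq (x + 2)) F2 ∧ 0 < F2 ∧
      F1 / F2 = (x + 1 - α) * (x + α + β) * (x + 1 - β) /
        ((x + 1 + α) * (x + 2 - α - β) * (x + 1 + β)) := by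
  have hx2 : 2 < x + 2 := by linarith
  have ha := aSeq_pos hα0 hα1 hβ0 hβ1
  have hb := bSeq_pos hx
  have hb' := bSeq_pos hx2
  obtain ⟨F1, hF1, p1⟩ := cf_converges hα0 hα1 hβ0 hβ1 hx
  obtain ⟨F2, hF2, p2⟩ := cf_converges hα0 hα1 hβ0 hβ1 hx2
  refine ⟨F1, F2, hF1, p1, hF2, p2, ?_⟩
  have hx1 : x + 1 ≠ 0 := by linarith
  have i1 : 0 < x + 1 + α := by linarith
  have i2 : 0 < x + 1 + β := by linarith
  have i3 : 0 < x + 2 - α - β := by linarith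
  have i4 : 0 < x + 1 := by linarith
  have hS : 0 < cS α β x := by unfold cS; positivity
  have kA := contig α β x hx (cfA (aSeq α β) (bSeq x)) (cfA (aSeq α β) (bSeq (x + 2)))
    (cS α β x) (cfA_rec _ _) (cfA_rec _ _) (by simp [cfA])
    (by simp [cfA, bSeq, aSeq, cS, cP]; field_simp; ring)
  have kB := contig α β x hx (cfB (aSeq α β) (bSeq x)) (cfB (aSeq α β) (bSeq (x + 2)))
    (cP α β x) (cfB_rec _ _) (cfB_rec _ _) (by simp [cfB]) (by simp [cfB])
  have hsub : Tendsto (fun m : ℕ => 2 * m + 3) atTop atTop :=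
    tendsto_atTop_mono (fun m => by simp only [id]; omega) tendsto_id
  have l1 := hF1.2.comp hsub
  have l2 := hF2.2.comp hsub
  have l3 := ((l1.const_mul (cS α β x)).sub (l2.const_mul (cP α β x)))
  have l4 : Tendsto (fun m : ℕ => cS α β x * (cfA (aSeq α β) (bSeq x) (2 * m + 3) /
      cfB (aSeq α β) (bSeq x) (2 * m + 3)) - cP α β x * (cfA (aSeq α β) (bSeq (x + 2)) (2 * m + 3) /
      cfB (aSeq α β) (bSeq (x + 2)) (2 * m + 3))) atTop (nhds 0) := by
    refine squeeze_zero_norm (fun m => ?_) (err_tendsto hα0 hα1 hβ0 hβ1 hx)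
    have e1 := kA (2 * m + 3)
    have e2 := kB (2 * m + 3)
    have e3 := cf_det (aSeq α β) (bSeq (x + 2)) (2 * m + 3)
    have hq : qq (2 * m + 3) = -1 := by unfold qq; rw [if_neg (by omega)]
    have hsg : (-1 : ℝ) ^ (2 * m + 3 + 1) = 1 := Even.neg_one_pow ⟨m + 2, by ring⟩
    rw [hq] at e1 e2
    rw [hsg] at e3
    have b3 := (cfB_pos _ _ ha hb (2 * m + 2)).1
    have b3' := (cfB_pos _ _ ha hb' (2 * m + 2)).1
    have hle := (cfB_mono (aSeq α β) (bSeq x) (bSeq (x + 2)) ha hb (fun n => by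
      unfold bSeq
      split_ifs
      · linarith
      · linarith
      · exact mul_le_mul_of_nonneg_left (by linarith) (Nat.cast_nonneg n)) (2 * m + 2)).1
    have hp := prA_pos _ ha (2 * m + 3)
    simp only [show 2 * m + 2 + 1 = 2 * m + 3 by omega] at *
    set A3 := cfA (aSeq α β) (bSeq x) (2 * m + 3)
    set B3 := cfB (aSeq α β) (bSeq x) (2 * m + 3)
    set A3' := cfA (aSeq α β) (bSeq (x + 2)) (2 * m + 3)
    set B3' := cfB (aSeq α β) (bSeq (x + 2)) (2 * m + 3)
    have e : cS α β x * (A3 / B3) - cP α β x * (A3' / B3') =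
        -(prA (aSeq α β) (2 * m + 3) / (B3 * B3')) := by
      field_simp
      linear_combination B3' * e1 - A3' * e2 - e3
    rw [e, norm_neg, Real.norm_of_nonneg (by positivity)]
    apply div_le_div_of_nonneg_left hp.le (by positivity)
    nlinarith
  have l5 := tendsto_nhds_unique l3 l4
  have l6 : F1 / F2 = cP α β x / cS α β x := by
    rw [div_eq_div_iff p2.ne' hS.ne']
    linarith
  rw [l6]
  unfold cP cS
  field_simp
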